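/- (Main theorem.) Let (H, A, C) be a Doi Hom-Hopf datum. The following are equivalent: (i) there exists a normalized (A,β)-integral θ : C⊗C → A; (ii) there exists a family of k-linear maps ν_M : M⊗C → M, one for each Doi Hom-Hopf module (M, μ) over (H, A, C), such that each ν_M satisfies ν_M∘(μ⊗γ) = μ∘ν_M, is right A-linear for the action (m⊗c)·a = m·a₀ ⊗ c·a₁ on M⊗C, is right C-colinear for the coaction ρ_{M⊗C}(m⊗c) = (μ⁻¹(m)⊗c₁)⊗γ(c₂), satisfies ν_M(m₀⊗m₁) = m for all m ∈ M, and the family is natural (for every morphism f : M → N of Doi Hom-Hopf modules, ν_N∘(f⊗id_C) = f∘ν_M). (This says exactly that the forgetful functor from Doi Hom-Hopf modules to right (A,β)-Hom-modules is separable.) -/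

import Mathlib

open TensorProduct

namespace DoiHomHopf

/-- A monoidal Hom-algebra `(A, β)`. -/
structure HomAlg (k : Type*) [CommRing k] (A : Type*) [AddCommGroup A] [Module k A] where
  str : A ≃ₗ[k] A
  mul : A →ₗ[k] A →ₗ[k] A
  one : A
  str_mul : ∀ a b, str (mul a b) = mul (str a) (str b)
  str_one : str one = one
  hom_assoc : ∀ a b c, mul (str a) (mul b c) = mul (mul a b) (str c)
  mul_one : ∀ a, mul a one = str a
  one_mul : ∀ a, mul one a = str a

/-- A monoidal Hom-coalgebra `(C, γ)`. -/
structure HomCoalg (k : Type*) [CommRing k] (C : Type*) [AddCommGroup C] [Module k C] where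
  str : C ≃ₗ[k] C
  comul : C →ₗ[k] C ⊗[k] C
  counit : C →ₗ[k] k
  comul_str : ∀ c, comul (str c) = TensorProduct.map str.toLinearMap str.toLinearMap (comul c)
  counit_str : ∀ c, counit (str c) = counit c
  hom_coassoc : ∀ c,
    TensorProduct.map str.symm.toLinearMap comul (comul c) =
      TensorProduct.assoc k C C C (TensorProduct.map comul str.symm.toLinearMap (comul c))
  counit_comul_left : ∀ c,
    TensorProduct.lid k C (TensorProduct.map counit LinearMap.id (comul c)) = str.symm c
  counit_comul_right : ∀ c,
    TensorProduct.rid k C (TensorProduct.map LinearMap.id counit (comul c)) = str.symm c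

/-- A monoidal Hom-bialgebra. -/
structure HomBialg (k : Type*) [CommRing k] (H : Type*) [AddCommGroup H] [Module k H]
    extends HomAlg k H, HomCoalg k H where
  comul_mul : ∀ a b, comul (mul a b) = TensorProduct.map₂ mul mul (comul a) (comul b)
  comul_one : comul one = one ⊗ₜ[k] one
  counit_mul : ∀ a b, counit (mul a b) = counit a * counit b
  counit_one : counit one = 1

/-- A monoidal Hom-Hopf algebra `(H, α)` with antipode `S`. -/
structure HomHopf (k : Type*) [CommRing k] (H : Type*) [AddCommGroup H] [Module k H]
    extends HomBialg k H where
  S : H →ₗ[k] H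
  S_mul_comul : ∀ h,
    TensorProduct.lift mul (TensorProduct.map S LinearMap.id (comul h)) = counit h • one
  mul_S_comul : ∀ h,
    TensorProduct.lift mul (TensorProduct.map LinearMap.id S (comul h)) = counit h • one
  S_str : ∀ h, S (str h) = str (S h)

/-- A right `(A, β)`-Hom-module `(M, μ)`. -/
structure HomMod {k : Type*} [CommRing k] {A : Type*} [AddCommGroup A] [Module k A]
    (hA : HomAlg k A) (M : Type*) [AddCommGroup M] [Module k M] where
  str : M ≃ₗ[k] M
  act : M →ₗ[k] A →ₗ[k] M
  act_act : ∀ m a b, act (act m a) (hA.str b) = act (str m) (hA.mul a b)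
  act_one : ∀ m, act m hA.one = str m
  str_act : ∀ m a, str (act m a) = act (str m) (hA.str a)

/-- A right `(C, γ)`-Hom-comodule `(M, μ)`. -/
structure HomComod {k : Type*} [CommRing k] {C : Type*} [AddCommGroup C] [Module k C]
    (hC : HomCoalg k C) (M : Type*) [AddCommGroup M] [Module k M] where
  str : M ≃ₗ[k] M
  coact : M →ₗ[k] M ⊗[k] C
  hom_coassoc : ∀ m,
    TensorProduct.assoc k M C C
        (TensorProduct.map coact hC.str.symm.toLinearMap (coact m)) =
      TensorProduct.map str.symm.toLinearMap hC.comul (coact m)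
  counit_coact : ∀ m,
    TensorProduct.rid k M (TensorProduct.map LinearMap.id hC.counit (coact m)) = str.symm m
  coact_str : ∀ m, coact (str m) = TensorProduct.map str.toLinearMap hC.str.toLinearMap (coact m)

/-- A right `(H, α)`-Hom-comodule algebra `(A, β)`. -/
structure HomComodAlg {k : Type*} [CommRing k] {H : Type*} [AddCommGroup H] [Module k H]
    (hH : HomBialg k H) (A : Type*) [AddCommGroup A] [Module k A] extends HomAlg k A where
  coact : A →ₗ[k] A ⊗[k] H
  hom_coassoc : ∀ a,
    TensorProduct.assoc k A H H
        (TensorProduct.map coact hH.str.symm.toLinearMap (coact a)) =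
      TensorProduct.map str.symm.toLinearMap hH.comul (coact a)
  counit_coact : ∀ a,
    TensorProduct.rid k A (TensorProduct.map LinearMap.id hH.counit (coact a)) = str.symm a
  coact_str : ∀ a, coact (str a) = TensorProduct.map str.toLinearMap hH.str.toLinearMap (coact a)
  coact_mul : ∀ a b, coact (mul a b) = TensorProduct.map₂ mul hH.mul (coact a) (coact b)
  coact_one : coact one = one ⊗ₜ[k] hH.one

/-- A right `(H, α)`-Hom-module coalgebra `(C, γ)`. -/
structure HomModCoalg {k : Type*} [CommRing k] {H : Type*} [AddCommGroup H] [Module k H]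
    (hH : HomBialg k H) (C : Type*) [AddCommGroup C] [Module k C] extends HomCoalg k C where
  act : C →ₗ[k] H →ₗ[k] C
  act_act : ∀ c h g, act (act c h) (hH.str g) = act (str c) (hH.mul h g)
  act_one : ∀ c, act c hH.one = str c
  str_act : ∀ c h, str (act c h) = act (str c) (hH.str h)
  comul_act : ∀ c h, comul (act c h) = TensorProduct.map₂ act act (comul c) (hH.comul h)
  counit_act : ∀ c h, counit (act c h) = counit c * hH.counit h

/-- A Doi Hom-Hopf module `(M, μ)` over the Doi Hom-Hopf datum `(H, A, C)`. -/
structure DoiMod {k : Type*} [CommRing k] {H A C : Type*}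
    [AddCommGroup H] [Module k H] [AddCommGroup A] [Module k A] [AddCommGroup C] [Module k C]
    {hH : HomBialg k H} (hA : HomComodAlg hH A) (hC : HomModCoalg hH C)
    (M : Type*) [AddCommGroup M] [Module k M] where
  str : M ≃ₗ[k] M
  act : M →ₗ[k] A →ₗ[k] M
  coact : M →ₗ[k] M ⊗[k] C
  act_act : ∀ m a b, act (act m a) (hA.str b) = act (str m) (hA.mul a b)
  act_one : ∀ m, act m hA.one = str m
  str_act : ∀ m a, str (act m a) = act (str m) (hA.str a)
  hom_coassoc : ∀ m,
    TensorProduct.assoc k M C C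
        (TensorProduct.map coact hC.str.symm.toLinearMap (coact m)) =
      TensorProduct.map str.symm.toLinearMap hC.comul (coact m)
  counit_coact : ∀ m,
    TensorProduct.rid k M (TensorProduct.map LinearMap.id hC.counit (coact m)) = str.symm m
  coact_str : ∀ m, coact (str m) = TensorProduct.map str.toLinearMap hC.str.toLinearMap (coact m)
  compat : ∀ m a,
    coact (act m a) = TensorProduct.map₂ act hC.act (coact m) (hA.coact a)

/-- `f` is a morphism of Doi Hom-Hopf modules. -/
structure IsDoiHom {k : Type*} [CommRing k] {H A C : Type*}
    [AddCommGroup H] [Module k H] [AddCommGroup A] [Module k A] [AddCommGroup C] [Module k C]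
    {hH : HomBialg k H} {hA : HomComodAlg hH A} {hC : HomModCoalg hH C}
    {M N : Type*} [AddCommGroup M] [Module k M] [AddCommGroup N] [Module k N]
    (dM : DoiMod hA hC M) (dN : DoiMod hA hC N) (f : M →ₗ[k] N) : Prop where
  str_comm : ∀ m, f (dM.str m) = dN.str (f m)
  act_comm : ∀ m a, f (dM.act m a) = dN.act (f m) a
  coact_comm : ∀ m, dN.coact (f m) = TensorProduct.map f LinearMap.id (dM.coact m)

/-- A normalized `(A, β)`-integral `θ : C ⊗ C → A` for the Doi Hom-Hopf datum `(H, A, C)`. -/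
structure NIntegral {k : Type*} [CommRing k] {H A C : Type*}
    [AddCommGroup H] [Module k H] [AddCommGroup A] [Module k A] [AddCommGroup C] [Module k C]
    {hH : HomBialg k H} (hA : HomComodAlg hH A) (hC : HomModCoalg hH C) where
  θ : C ⊗[k] C →ₗ[k] A
  θ_str : ∀ c d, θ (hC.str c ⊗ₜ[k] hC.str d) = hA.str (θ (c ⊗ₜ[k] d))
  cond1 : ∀ c d : C,
    TensorProduct.map (TensorProduct.curry θ (hC.str.symm d)) hC.str.toLinearMap (hC.comul c) =
      TensorProduct.map hA.str.toLinearMap (TensorProduct.lift hC.act)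
        ((TensorProduct.assoc k A C H)
          (TensorProduct.map (TensorProduct.comm k C A).toLinearMap LinearMap.id
            ((TensorProduct.assoc k C A H).symm
              (TensorProduct.map LinearMap.id
                (hA.coact ∘ₗ (TensorProduct.curry θ).flip (hC.str.symm c)) (hC.comul d)))))
  cond2 : ∀ c, θ (hC.comul c) = hC.counit c • hA.one
  cond3 : ∀ (a : A) (c d : C),
    TensorProduct.lift hA.mul
      (TensorProduct.map LinearMap.id θ
        ((TensorProduct.assoc k A C C)
          (TensorProduct.map
            (TensorProduct.map (hA.str.toLinearMap ∘ₗ hA.str.toLinearMap)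
              (hC.act (hC.str.symm d)))
            (hC.act (hC.str.symm c))
            (TensorProduct.map hA.coact hH.str.symm.toLinearMap (hA.coact a))))) =
      hA.mul (θ (d ⊗ₜ[k] c)) a

/-- The right `A`-action on `M ⊗ C` given by `(m ⊗ c) · a = m · a₀ ⊗ c · a₁`. -/
noncomputable def Gact {k : Type*} [CommRing k] {H A C : Type*}
    [AddCommGroup H] [Module k H] [AddCommGroup A] [Module k A] [AddCommGroup C] [Module k C]
    {hH : HomBialg k H} (hA : HomComodAlg hH A) (hC : HomModCoalg hH C)
    {M : Type*} [AddCommGroup M] [Module k M] (act : M →ₗ[k] A →ₗ[k] M) :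
    (M ⊗[k] C) →ₗ[k] A →ₗ[k] (M ⊗[k] C) :=
  (TensorProduct.map₂ act hC.act).compl₂ hA.coact

/-- The right `C`-coaction on `M ⊗ C` given by `ρ(m ⊗ c) = (μ⁻¹(m) ⊗ c₁) ⊗ γ(c₂)`. -/
noncomputable def Gcoact {k : Type*} [CommRing k] {C : Type*} [AddCommGroup C] [Module k C]
    (hC : HomCoalg k C) {M : Type*} [AddCommGroup M] [Module k M] (str : M ≃ₗ[k] M) :
    (M ⊗[k] C) →ₗ[k] (M ⊗[k] C) ⊗[k] C :=
  (TensorProduct.assoc k M C C).symm.toLinearMap ∘ₗ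
    TensorProduct.map str.symm.toLinearMap
      (TensorProduct.map LinearMap.id hC.str.toLinearMap ∘ₗ hC.comul)

/-- The counit of the adjunction: `δ_N(n ⊗ c) = ε(c) ν(n)`. -/
noncomputable def deltaMap {k : Type*} [CommRing k] {C : Type*} [AddCommGroup C] [Module k C]
    (hC : HomCoalg k C) {N : Type*} [AddCommGroup N] [Module k N] (str : N ≃ₗ[k] N) :
    (N ⊗[k] C) →ₗ[k] N :=
  str.toLinearMap ∘ₗ (TensorProduct.rid k N).toLinearMap ∘ₗ
    TensorProduct.map LinearMap.id hC.counit

/-- The map `ν_M : M ⊗ C → M`, `ν_M(m ⊗ c) = μ(m₀) · θ(m₁ ⊗ γ⁻¹(c))`. -/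
noncomputable def nuMap {k : Type*} [CommRing k] {H A C : Type*}
    [AddCommGroup H] [Module k H] [AddCommGroup A] [Module k A] [AddCommGroup C] [Module k C]
    {hH : HomBialg k H} {hA : HomComodAlg hH A} {hC : HomModCoalg hH C}
    {M : Type*} [AddCommGroup M] [Module k M]
    (θ : C ⊗[k] C →ₗ[k] A) (d : DoiMod hA hC M) : (M ⊗[k] C) →ₗ[k] M :=
  TensorProduct.lift d.act ∘ₗ TensorProduct.map d.str.toLinearMap θ ∘ₗ
    (TensorProduct.assoc k M C C).toLinearMap ∘ₗ
    TensorProduct.map d.coact hC.str.symm.toLinearMap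

end DoiHomHopf

open DoiHomHopf

universe u v

/-!
A normalized integral `θ` yields the retraction `ν_M(m ⊗ c) = μ(m₀) · θ(m₁ ⊗ γ⁻¹(c))`: linearity is
condition (4.3), colinearity is (4.1), and the retraction property is (4.2).

Conversely, for a Hom-module `U` compose the retraction on the induced module `U ⊗ C` with the
counit `U ⊗ C → U` of the adjunction. The resulting map `U ⊗ C ⊗ C → U` is natural in `U`, so it is
determined by its value at the generator of the free Hom-module `⨁ₙ A` (`n ∈ ℤ`) on one generator,
and the degree `1` part of that value is `θ`. Conditions (4.2) and (4.3) are then coefficients of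
the retraction property and of linearity. Condition (4.1) compares two expressions for the
retraction on `U ⊗ C`: one from its colinearity, the other from its naturality along the coaction
`U ⊗ C → (U ⊗ C) ⊗ C`.
-/

namespace DoiHomHopf

theorem apply_symm_eq_map_symm {k M M' N N' P P' : Type*} [CommRing k]
    [AddCommGroup M] [Module k M] [AddCommGroup M'] [Module k M']
    [AddCommGroup N] [Module k N] [AddCommGroup N'] [Module k N']
    [AddCommGroup P] [Module k P] [AddCommGroup P'] [Module k P']
    {f : M →ₗ[k] N ⊗[k] P} {f' : M' →ₗ[k] N' ⊗[k] P'}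
    {e : M ≃ₗ[k] M'} {e₁ : N ≃ₗ[k] N'} {e₂ : P ≃ₗ[k] P'}
    (h : ∀ m, f' (e m) = map e₁.toLinearMap e₂.toLinearMap (f m)) (m : M') :
    f (e.symm m) = map e₁.symm.toLinearMap e₂.symm.toLinearMap (f' m) := by
  have hm := h (e.symm m)
  rw [e.apply_symm_apply] at hm
  rw [hm]
  exact ((TensorProduct.congr e₁ e₂).symm_apply_apply _).symm

section Structures

variable {k H A C U V M : Type*} [CommRing k]
  [AddCommGroup H] [Module k H] [AddCommGroup A] [Module k A] [AddCommGroup C] [Module k C]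
  [AddCommGroup U] [Module k U] [AddCommGroup V] [Module k V] [AddCommGroup M] [Module k M]
  {hH : HomBialg k H}

theorem HomAlg.str_symm_mul (hA : HomAlg k A) (a b : A) :
    hA.str.symm (hA.mul a b) = hA.mul (hA.str.symm a) (hA.str.symm b) := by
  simp [LinearEquiv.symm_apply_eq, hA.str_mul]

theorem HomAlg.str_symm_one (hA : HomAlg k A) : hA.str.symm hA.one = hA.one := by
  rw [LinearEquiv.symm_apply_eq, hA.str_one]

theorem HomMod.str_symm_act {hA : HomAlg k A} (d : HomMod hA U) (u : U) (a : A) :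
    d.str.symm (d.act u a) = d.act (d.str.symm u) (hA.str.symm a) := by
  simp [LinearEquiv.symm_apply_eq, d.str_act]

theorem HomModCoalg.str_symm_act (hC : HomModCoalg hH C) (c : C) (h : H) :
    hC.str.symm (hC.act c h) = hC.act (hC.str.symm c) (hH.str.symm h) := by
  simp [LinearEquiv.symm_apply_eq, hC.str_act]

/-- The right Hom-module underlying a Doi Hom-Hopf module: the forgetful functor on objects. -/
def DoiMod.toHomMod {hA : HomComodAlg hH A} {hC : HomModCoalg hH C} (d : DoiMod hA hC M) :
    HomMod hA.toHomAlg M where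
  str := d.str
  act := d.act
  act_act := d.act_act
  act_one := d.act_one
  str_act := d.str_act

/-- `f` is a morphism of right Hom-modules. -/
structure IsHomModHom {hA : HomAlg k A} (d : HomMod hA U) (e : HomMod hA V) (f : U →ₗ[k] V) :
    Prop where
  str_comm : ∀ u, f (d.str u) = e.str (f u)
  act_comm : ∀ u a, f (d.act u a) = e.act (f u) a

theorem IsHomModHom.str_symm_comm {hA : HomAlg k A} {d : HomMod hA U} {e : HomMod hA V}
    {f : U →ₗ[k] V} (hf : IsHomModHom d e f) (u : U) : f (d.str.symm u) = e.str.symm (f u) := by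
  rw [LinearEquiv.eq_symm_apply, ← hf.str_comm, LinearEquiv.apply_symm_apply]

end Structures

section Induced

variable {k H A C U V M : Type*} [CommRing k]
  [AddCommGroup H] [Module k H] [AddCommGroup A] [Module k A] [AddCommGroup C] [Module k C]
  [AddCommGroup U] [Module k U] [AddCommGroup V] [Module k V] [AddCommGroup M] [Module k M]

theorem Gcoact_tmul (hC : HomCoalg k C) (μ : U ≃ₗ[k] U) (u : U) (c : C) :
    Gcoact hC μ (u ⊗ₜ c) = map (mk k U C (μ.symm u)) hC.str.toLinearMap (hC.comul c) := by
  simp only [Gcoact, LinearMap.comp_apply, map_tmul]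
  generalize hC.comul c = t
  induction t with
  | zero => simp
  | tmul x y => simp
  | add s t hs ht => simp only [map_add, tmul_add, hs, ht]

theorem Gcoact_coassoc (hC : HomCoalg k C) (μ : U ≃ₗ[k] U) (x : U ⊗[k] C) :
    TensorProduct.assoc k (U ⊗[k] C) C C
        (map (Gcoact hC μ) hC.str.symm.toLinearMap (Gcoact hC μ x)) =
      map (TensorProduct.congr μ hC.str).symm.toLinearMap hC.comul (Gcoact hC μ x) := by
  induction x with
  | zero => simp
  | add x y hx hy => simp only [map_add, hx, hy]
  | tmul u c =>
    have hleft : map (Gcoact hC μ) hC.str.symm.toLinearMap (Gcoact hC μ (u ⊗ₜ c)) =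
        map (map (mk k U C (μ.symm (μ.symm u))) hC.str.toLinearMap) hC.str.toLinearMap
          (map hC.comul hC.str.symm.toLinearMap (hC.comul c)) := by
      rw [Gcoact_tmul, map_map, map_map]
      congr 2 <;> ext <;> simp [Gcoact_tmul]
    have hright : map (TensorProduct.congr μ hC.str).symm.toLinearMap hC.comul
          (Gcoact hC μ (u ⊗ₜ c)) =
        map (mk k U C (μ.symm (μ.symm u))) (map hC.str.toLinearMap hC.str.toLinearMap)
          (map hC.str.symm.toLinearMap hC.comul (hC.comul c)) := by
      rw [Gcoact_tmul, map_map, map_map]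
      congr 2; ext; simp [hC.comul_str]
    rw [hleft, hright, hC.hom_coassoc, map_map_assoc]

theorem Gcoact_counit_right (hC : HomCoalg k C) (μ : U ≃ₗ[k] U) (x : U ⊗[k] C) :
    TensorProduct.rid k (U ⊗[k] C) (map .id hC.counit (Gcoact hC μ x)) =
      (TensorProduct.congr μ hC.str).symm x := by
  induction x with
  | zero => simp
  | add x y hx hy => simp only [map_add, hx, hy]
  | tmul u c =>
    rw [Gcoact_tmul, congr_symm_tmul, ← hC.counit_comul_right c]
    generalize hC.comul c = t
    induction t with
    | zero => simp
    | tmul x y => simp [hC.counit_str]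
    | add s t hs ht => simp only [map_add, tmul_add, hs, ht]

theorem map_deltaMap_Gcoact (hC : HomCoalg k C) (μ : U ≃ₗ[k] U) (x : U ⊗[k] C) :
    map (deltaMap hC μ) .id (Gcoact hC μ x) = x := by
  induction x with
  | zero => simp
  | add x y hx hy => simp only [map_add, hx, hy]
  | tmul u c =>
    have hc : u ⊗ₜ[k] c = u ⊗ₜ hC.str (TensorProduct.lid k C (map hC.counit .id (hC.comul c))) := by
      rw [hC.counit_comul_left, LinearEquiv.apply_symm_apply]
    refine Eq.trans ?_ hc.symm
    rw [Gcoact_tmul]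
    generalize hC.comul c = t
    induction t with
    | zero => simp
    | tmul x y => simp [deltaMap, smul_tmul]
    | add s t hs ht => simp only [map_add, tmul_add, hs, ht]

theorem Gcoact_congr (hC : HomCoalg k C) (μ : U ≃ₗ[k] U) (x : U ⊗[k] C) :
    Gcoact hC μ (TensorProduct.congr μ hC.str x) =
      map (TensorProduct.congr μ hC.str).toLinearMap hC.str.toLinearMap (Gcoact hC μ x) := by
  induction x with
  | zero => simp
  | add x y hx hy => simp only [map_add, hx, hy]
  | tmul u c =>
    rw [congr_tmul, Gcoact_tmul, Gcoact_tmul, hC.comul_str, map_map, map_map]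
    congr 2; ext; simp

variable {hH : HomBialg k H} (hA : HomComodAlg hH A) (hC : HomModCoalg hH C)

theorem Gact_tmul (act : U →ₗ[k] A →ₗ[k] U) (u : U) (c : C) (a : A) :
    Gact hA hC act (u ⊗ₜ c) a = map (act u) (hC.act c) (hA.coact a) := by
  simp [Gact]

theorem Gact_Gact (d : HomMod hA.toHomAlg U) (x : U ⊗[k] C) (a b : A) :
    Gact hA hC d.act (Gact hA hC d.act x a) (hA.str b) =
      Gact hA hC d.act (TensorProduct.congr d.str hC.str x) (hA.mul a b) := by
  simp only [Gact, LinearMap.compl₂_apply, hA.coact_str, hA.coact_mul]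
  generalize hA.coact a = s
  generalize hA.coact b = t
  induction x with
  | zero => simp
  | add x y hx hy => simp only [map_add, LinearMap.add_apply, hx, hy]
  | tmul u c =>
  induction s with
  | zero => simp
  | add s s' hs hs' => simp only [map_add, LinearMap.add_apply, hs, hs']
  | tmul a h =>
  induction t with
  | zero => simp
  | add t t' ht ht' => simp only [map_add, ht, ht']
  | tmul b g => simp [d.act_act, hC.act_act]

theorem Gact_one (d : HomMod hA.toHomAlg U) (x : U ⊗[k] C) :
    Gact hA hC d.act x hA.one = TensorProduct.congr d.str hC.str x := by
  induction x with
  | zero => simp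
  | add x y hx hy => simp only [map_add, LinearMap.add_apply, hx, hy]
  | tmul u c => simp [Gact_tmul, hA.coact_one, d.act_one, hC.act_one]

theorem congr_Gact (d : HomMod hA.toHomAlg U) (x : U ⊗[k] C) (a : A) :
    TensorProduct.congr d.str hC.str (Gact hA hC d.act x a) =
      Gact hA hC d.act (TensorProduct.congr d.str hC.str x) (hA.str a) := by
  induction x with
  | zero => simp
  | add x y hx hy => simp only [map_add, LinearMap.add_apply, hx, hy]
  | tmul u c =>
    rw [congr_tmul, Gact_tmul, Gact_tmul, hA.coact_str, map_map, ← LinearEquiv.coe_coe,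
      toLinearMap_congr, map_map]
    congr 2 <;> ext <;> simp [d.str_act, hC.str_act]

theorem Gcoact_Gact (d : HomMod hA.toHomAlg U) (x : U ⊗[k] C) (a : A) :
    Gcoact hC.toHomCoalg d.str (Gact hA hC d.act x a) =
      map₂ (Gact hA hC d.act) hC.act (Gcoact hC.toHomCoalg d.str x) (hA.coact a) := by
  induction x with
  | zero => simp
  | add x y hx hy => simp only [map_add, LinearMap.add_apply, hx, hy]
  | tmul u c =>
    have hleft : Gcoact hC.toHomCoalg d.str (Gact hA hC d.act (u ⊗ₜ c) a) =
        (TensorProduct.assoc k U C C).symm (map (d.act (d.str.symm u))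
          (map .id hC.str.toLinearMap ∘ₗ map₂ hC.act hC.act (hC.comul c))
          (TensorProduct.assoc k A H H
            (map hA.coact hH.str.symm.toLinearMap (hA.coact a)))) := by
      rw [hA.hom_coassoc, map_map, Gact_tmul, Gcoact,
        LinearMap.comp_apply, map_map, LinearEquiv.coe_coe]
      congr 3 <;> ext <;> simp [d.str_symm_act, hC.comul_act]
    rw [hleft, Gcoact_tmul]
    generalize hC.comul c = t
    induction t with
    | zero => simp
    | add s t hs ht =>
      simp only [map_add, LinearMap.add_apply, LinearMap.comp_add, map_add_right, hs, ht]
    | tmul x y =>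
      have hmap : map .id hC.str.toLinearMap ∘ₗ map₂ hC.act hC.act (x ⊗ₜ[k] y) =
          map (hC.act x) (hC.act (hC.str y) ∘ₗ hH.str.toLinearMap) := by
        ext; simp [hC.str_act]
      rw [hmap, map_map_assoc, LinearEquiv.symm_apply_apply, map_map, map_tmul, map₂_apply_tmul]
      congr 2; ext; simp

/-- The Doi Hom-Hopf module `U ⊗ C` induced by a Hom-module `U`: the right adjoint of the
forgetful functor on objects. -/
noncomputable def HomMod.induced {hA : HomComodAlg hH A} (d : HomMod hA.toHomAlg U)
    (hC : HomModCoalg hH C) : DoiMod hA hC (U ⊗[k] C) where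
  str := TensorProduct.congr d.str hC.str
  act := Gact hA hC d.act
  coact := Gcoact hC.toHomCoalg d.str
  act_act := Gact_Gact hA hC d
  act_one := Gact_one hA hC d
  str_act := congr_Gact hA hC d
  hom_coassoc := Gcoact_coassoc hC.toHomCoalg d.str
  counit_coact := Gcoact_counit_right hC.toHomCoalg d.str
  coact_str := Gcoact_congr hC.toHomCoalg d.str
  compat := Gcoact_Gact hA hC d

variable {hA hC}

theorem IsHomModHom.induced {d : HomMod hA.toHomAlg U} {e : HomMod hA.toHomAlg V}
    {f : U →ₗ[k] V} (hf : IsHomModHom d e f) (hC : HomModCoalg hH C) :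
    IsDoiHom (d.induced hC) (e.induced hC) (map f .id) where
  str_comm x := by
    induction x with
    | zero => simp
    | add x y hx hy => simp only [map_add, hx, hy]
    | tmul u c => simp [HomMod.induced, hf.str_comm]
  act_comm x a := by
    induction x with
    | zero => simp
    | add x y hx hy => simp only [map_add, LinearMap.add_apply, hx, hy]
    | tmul u c =>
      simp only [HomMod.induced, map_tmul, Gact_tmul, map_map]
      congr 2; ext; simp [hf.act_comm]
  coact_comm x := by
    induction x with
    | zero => simp
    | add x y hx hy => simp only [map_add, hx, hy]
    | tmul u c =>
      simp only [HomMod.induced, map_tmul, Gcoact_tmul, map_map]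
      congr 2; ext; simp [hf.str_symm_comm]

theorem DoiMod.isDoiHom_coact (d : DoiMod hA hC M) :
    IsDoiHom d (d.toHomMod.induced hC) d.coact where
  str_comm := d.coact_str
  act_comm := d.compat
  coact_comm m := by
    have hcoassoc := (LinearEquiv.eq_symm_apply _).2 (d.hom_coassoc m)
    have hGcoact : Gcoact hC.toHomCoalg d.str (d.coact m) = map .id hC.str.toLinearMap
        ((TensorProduct.assoc k M C C).symm (map d.str.symm.toLinearMap hC.comul (d.coact m))) := by
      rw [← map_id (R := k) (M := M) (N := C), map_map_assoc_symm, map_map, LinearMap.id_comp]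
      rfl
    change Gcoact hC.toHomCoalg d.str (d.coact m) = _
    rw [hGcoact, ← hcoassoc, map_map]
    congr 2; ext; simp

theorem deltaMap_congr (hC : HomCoalg k C) (μ : U ≃ₗ[k] U) (x : U ⊗[k] C) :
    deltaMap hC μ (TensorProduct.congr μ hC.str x) = μ (deltaMap hC μ x) := by
  induction x with
  | zero => simp
  | add x y hx hy => simp only [map_add, hx, hy]
  | tmul u c => simp [deltaMap, hC.counit_str]

theorem deltaMap_Gact (d : HomMod hA.toHomAlg U) (x : U ⊗[k] C) (a : A) :
    deltaMap hC.toHomCoalg d.str (Gact hA hC d.act x a) =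
      d.act (deltaMap hC.toHomCoalg d.str x) a := by
  induction x with
  | zero => simp
  | add x y hx hy => simp only [map_add, LinearMap.add_apply, hx, hy]
  | tmul u c =>
    have ha : d.act (deltaMap hC.toHomCoalg d.str (u ⊗ₜ c)) a =
        d.act (deltaMap hC.toHomCoalg d.str (u ⊗ₜ c))
          (hA.str (TensorProduct.rid k A (map .id hH.counit (hA.coact a)))) := by
      rw [hA.counit_coact, LinearEquiv.apply_symm_apply]
    rw [ha, Gact_tmul]
    generalize hA.coact a = t
    induction t with
    | zero => simp
    | tmul x y => simp [deltaMap, d.str_act, hC.counit_act, smul_smul, mul_comm]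
    | add s t hs ht => simp only [map_add, hs, ht]

theorem deltaMap_map (hC : HomCoalg k C) {μ : U ≃ₗ[k] U} {ν : V ≃ₗ[k] V} {f : U →ₗ[k] V}
    (hf : ∀ u, f (μ u) = ν (f u)) (x : U ⊗[k] C) :
    deltaMap hC ν (map f .id x) = f (deltaMap hC μ x) := by
  induction x with
  | zero => simp
  | add x y hx hy => simp only [map_add, hx, hy]
  | tmul u c => simp [deltaMap, hf]

theorem DoiMod.deltaMap_coact (d : DoiMod hA hC M) (m : M) :
    deltaMap hC.toHomCoalg d.str (d.coact m) = m := by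
  simp [deltaMap, d.counit_coact]

end Induced

section Integral

variable {k H A C M N : Type*} [CommRing k]
  [AddCommGroup H] [Module k H] [AddCommGroup A] [Module k A] [AddCommGroup C] [Module k C]
  [AddCommGroup M] [Module k M] [AddCommGroup N] [Module k N]
  {hH : HomBialg k H}

/-- The bilinear map `(x, y) ↦ β(θ(y ⊗ γ⁻¹(c))₀) ⊗ x · θ(y ⊗ γ⁻¹(c))₁`, whose value at `Δ(d)` is
the right-hand side of condition (4.1). -/
noncomputable def integralCoact (hA : HomComodAlg hH A) (hC : HomModCoalg hH C)
    (θ : C ⊗[k] C →ₗ[k] A) (c : C) : C →ₗ[k] C →ₗ[k] A ⊗[k] C :=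
  (mapBilinear (RingHom.id k) A H A C hA.str.toLinearMap ∘ₗ hC.act).compl₂
    (hA.coact ∘ₗ (curry θ).flip (hC.str.symm c))

variable {hA : HomComodAlg hH A} {hC : HomModCoalg hH C}

theorem integralCoact_apply (θ : C ⊗[k] C →ₗ[k] A) (c x y : C) :
    integralCoact hA hC θ c x y =
      map hA.str.toLinearMap (hC.act x) (hA.coact (θ (y ⊗ₜ hC.str.symm c))) := rfl

theorem lift_integralCoact (θ : C ⊗[k] C →ₗ[k] A) (c : C) (t : C ⊗[k] C) :
    lift (integralCoact hA hC θ c) t =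
      map hA.str.toLinearMap (lift hC.act)
        (TensorProduct.assoc k A C H
          (map (TensorProduct.comm k C A).toLinearMap .id
            ((TensorProduct.assoc k C A H).symm
              (map .id (hA.coact ∘ₗ (curry θ).flip (hC.str.symm c)) t)))) := by
  induction t with
  | zero => simp
  | add s t hs ht => simp only [map_add, hs, ht]
  | tmul x y =>
    simp only [lift.tmul, integralCoact_apply, map_tmul, LinearMap.comp_apply, LinearMap.flip_apply,
      curry_apply, LinearMap.id_apply]
    generalize hA.coact (θ (y ⊗ₜ hC.str.symm c)) = s
    induction s with
    | zero => simp
    | add s t hs ht => simp only [map_add, tmul_add, hs, ht]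
    | tmul a h => simp

theorem nuMap_tmul (θ : C ⊗[k] C →ₗ[k] A) (d : DoiMod hA hC M) (m : M) (c : C) :
    nuMap θ d (m ⊗ₜ c) =
      lift ((d.act ∘ₗ d.str.toLinearMap).compl₂ ((curry θ).flip (hC.str.symm c))) (d.coact m) := by
  simp only [nuMap, LinearMap.comp_apply, map_tmul]
  generalize d.coact m = t
  induction t with
  | zero => simp
  | add s t hs ht => simp only [map_add, add_tmul, hs, ht]
  | tmul m e => simp

theorem nuMap_map (θ : C ⊗[k] C →ₗ[k] A) {d : DoiMod hA hC M} {e : DoiMod hA hC N}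
    {f : M →ₗ[k] N} (hf : IsDoiHom d e f) (x : M ⊗[k] C) :
    nuMap θ e (map f .id x) = f (nuMap θ d x) := by
  induction x with
  | zero => simp
  | add x y hx hy => simp only [map_add, hx, hy]
  | tmul m c =>
    simp only [map_tmul, LinearMap.id_apply, nuMap_tmul, hf.coact_comm]
    generalize d.coact m = t
    induction t with
    | zero => simp
    | add s t hs ht => simp only [map_add, hs, ht]
    | tmul m e => simp [hf.act_comm, hf.str_comm]

/-- The map `m ⊗ (x ⊗ y) ↦ μ(m) · β⁻¹(b) ⊗ z`, where `b ⊗ z` is the value of `integralCoact` at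
`(γ(x), γ(y))`. It expresses the coaction on `ν_M(m ⊗ c)` through `(m₀)₀ ⊗ (m₀)₁ ⊗ γ⁻¹(m₁)`. -/
noncomputable def nuCoact (θ : C ⊗[k] C →ₗ[k] A) (d : DoiMod hA hC M) (c : C) :
    M ⊗[k] (C ⊗[k] C) →ₗ[k] M ⊗[k] C :=
  lift ((LinearMap.rTensorHom C ∘ₗ
    (d.act ∘ₗ d.str.toLinearMap).compl₂ hA.str.symm.toLinearMap).compl₂
      (lift (integralCoact hA hC θ c) ∘ₗ map hC.str.toLinearMap hC.str.toLinearMap))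

theorem nuCoact_tmul (θ : C ⊗[k] C →ₗ[k] A) (d : DoiMod hA hC M) (c : C) (m : M)
    (t : C ⊗[k] C) :
    nuCoact θ d c (m ⊗ₜ t) = map (d.act (d.str m) ∘ₗ hA.str.symm.toLinearMap) .id
      (lift (integralCoact hA hC θ c) (map hC.str.toLinearMap hC.str.toLinearMap t)) := rfl

theorem coact_nuMap_tmul (θ : C ⊗[k] C →ₗ[k] A) (d : DoiMod hA hC M) (m : M) (c : C) :
    d.coact (nuMap θ d (m ⊗ₜ c)) = nuCoact θ d c (TensorProduct.assoc k M C C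
      (map d.coact hC.str.symm.toLinearMap (d.coact m))) := by
  rw [nuMap_tmul]
  generalize d.coact m = t
  induction t with
  | zero => simp
  | add s t hs ht => simp only [map_add, hs, ht]
  | tmul m e =>
    simp only [lift.tmul, LinearMap.compl₂_apply, LinearMap.comp_apply, LinearEquiv.coe_coe,
      LinearMap.flip_apply, curry_apply, d.compat, d.coact_str, map_tmul]
    generalize d.coact m = t
    induction t with
    | zero => simp
    | add s t hs ht => simp only [map_add, LinearMap.add_apply, add_tmul, hs, ht]
    | tmul m x =>
      simp only [map_tmul, map₂_apply_tmul, assoc_tmul, nuCoact_tmul, lift.tmul,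
        LinearEquiv.coe_coe, LinearEquiv.apply_symm_apply, integralCoact_apply, map_map]
      congr 2; ext; simp

namespace NIntegral

variable (I : NIntegral hA hC)

theorem θ_str_tmul (c d : C) :
    I.θ (hC.str c ⊗ₜ d) = hA.str (I.θ (c ⊗ₜ hC.str.symm d)) := by
  rw [← I.θ_str, LinearEquiv.apply_symm_apply]

theorem θ_str_symm (c d : C) :
    I.θ (hC.str.symm c ⊗ₜ hC.str.symm d) = hA.str.symm (I.θ (c ⊗ₜ d)) := by
  rw [LinearEquiv.eq_symm_apply, ← I.θ_str, LinearEquiv.apply_symm_apply,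
    LinearEquiv.apply_symm_apply]

theorem nuMap_congr (d : DoiMod hA hC M) (x : M ⊗[k] C) :
    nuMap I.θ d (TensorProduct.congr d.str hC.str x) = d.str (nuMap I.θ d x) := by
  induction x with
  | zero => simp
  | add x y hx hy => simp only [map_add, hx, hy]
  | tmul m c =>
    simp only [congr_tmul, nuMap_tmul, d.coact_str]
    generalize d.coact m = t
    induction t with
    | zero => simp
    | add s t hs ht => simp only [map_add, hs, ht]
    | tmul m e => simp [d.str_act, I.θ_str_tmul]

theorem act_θ_act (d : HomMod hA.toHomAlg M) (m : M) (e c : C) (a : A) :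
    lift d.act (map d.str.toLinearMap I.θ (TensorProduct.assoc k M C C
      (map (map (d.act m) (hC.act e)) (hC.act c)
        (map hA.coact hH.str.symm.toLinearMap (hA.coact a))))) =
      d.act (d.act (d.str m) (I.θ (e ⊗ₜ c))) a := by
  have hcond3 := congrArg (fun b => d.act (d.str (d.str m)) (hA.str.symm b))
    (I.cond3 a (hC.str c) (hC.str e))
  simp only [LinearEquiv.symm_apply_apply] at hcond3
  refine Eq.trans ?_ (hcond3.trans ?_)
  · generalize map hA.coact hH.str.symm.toLinearMap (hA.coact a) = t
    induction t with
    | zero => simp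
    | add s t hs ht => simp only [map_add, hs, ht]
    | tmul s h =>
    induction s with
    | zero => simp
    | add s t hs ht => simp only [map_add, add_tmul, hs, ht]
    | tmul b g => simp [d.str_act, hA.str_symm_mul, ← d.act_act]
  · simp [I.θ_str, hA.str_symm_mul, ← d.act_act]

theorem nuMap_Gact (d : DoiMod hA hC M) (x : M ⊗[k] C) (a : A) :
    nuMap I.θ d (Gact hA hC d.act x a) = d.act (nuMap I.θ d x) a := by
  induction x with
  | zero => simp
  | add x y hx hy => simp only [map_add, LinearMap.add_apply, hx, hy]
  | tmul m c =>
    have hcoact : map d.coact hC.str.symm.toLinearMap (Gact hA hC d.act (m ⊗ₜ c) a) =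
        map (map₂ d.act hC.act (d.coact m)) (hC.act (hC.str.symm c))
          (map hA.coact hH.str.symm.toLinearMap (hA.coact a)) := by
      rw [Gact_tmul, map_map, map_map]
      congr 2 <;> ext <;> simp [d.compat, hC.str_symm_act]
    rw [nuMap_tmul]
    simp only [nuMap, LinearMap.comp_apply, hcoact]
    generalize d.coact m = t
    induction t with
    | zero => simp
    | add s t hs ht => simp only [map_add, map_add_left, LinearMap.add_apply, hs, ht]
    | tmul m e => exact I.act_θ_act d.toHomMod m e (hC.str.symm c) a

theorem map_curry_comul (c e : C) :
    map (curry I.θ e) hC.str.toLinearMap (hC.comul c) =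
      lift (integralCoact hA hC I.θ c)
        (map hC.str.toLinearMap hC.str.toLinearMap (hC.comul e)) := by
  rw [← hC.comul_str, lift_integralCoact, ← I.cond1, LinearEquiv.symm_apply_apply]

theorem coact_nuMap (d : DoiMod hA hC M) (x : M ⊗[k] C) :
    d.coact (nuMap I.θ d x) = map (nuMap I.θ d) .id (Gcoact hC.toHomCoalg d.str x) := by
  induction x with
  | zero => simp
  | add x y hx hy => simp only [map_add, hx, hy]
  | tmul m c =>
    have hν : nuMap I.θ d ∘ₗ TensorProduct.mk k M C (d.str.symm m) =
        lift d.act ∘ₗ map .id (hA.str.symm.toLinearMap ∘ₗ I.θ) ∘ₗ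
          (TensorProduct.assoc k M C C).toLinearMap ∘ₗ
          TensorProduct.mk k (M ⊗[k] C) C (d.coact m) := by
      ext b
      simp only [LinearMap.comp_apply, mk_apply, nuMap_tmul, apply_symm_eq_map_symm d.coact_str]
      generalize d.coact m = t
      induction t with
      | zero => simp
      | add s t hs ht => simp only [map_add, add_tmul, hs, ht]
      | tmul m e => simp [I.θ_str_symm]
    rw [coact_nuMap_tmul, d.hom_coassoc, Gcoact_tmul, map_map, hν]
    generalize d.coact m = t
    induction t with
    | zero => simp
    | add s t hs ht =>
      simp only [map_add, LinearMap.comp_add, map_add_left, LinearMap.add_apply, hs, ht]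
    | tmul m e =>
      rw [map_tmul, nuCoact_tmul, ← I.map_curry_comul, map_map]
      congr 2; ext; simp

theorem nuMap_coact (d : DoiMod hA hC M) (m : M) : nuMap I.θ d (d.coact m) = m := by
  have hcounit : d.str (TensorProduct.rid k M (map .id hC.counit (d.coact m))) = m := by
    rw [d.counit_coact, LinearEquiv.apply_symm_apply]
  simp only [nuMap, LinearMap.comp_apply, LinearEquiv.coe_coe, d.hom_coassoc]
  refine Eq.trans ?_ hcounit
  generalize d.coact m = t
  induction t with
  | zero => simp
  | add s t hs ht => simp only [map_add, hs, ht]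
  | tmul m c => simp [I.cond2, d.act_one]

end NIntegral

end Integral

section Free

variable {k H A C U : Type*} [CommRing k]
  [AddCommGroup H] [Module k H] [AddCommGroup A] [Module k A] [AddCommGroup C] [Module k C]
  [AddCommGroup U] [Module k U]

/-- The structure map `[n]a ↦ [n + 1]β(a)` of the free Hom-module `⨁ₙ A` on one generator, where
`[n]a` denotes `a` placed in degree `n`. -/
noncomputable def HomAlg.freeStr (hA : HomAlg k A) : (ℤ →₀ A) ≃ₗ[k] (ℤ →₀ A) :=
  Finsupp.lcongr (Equiv.addRight 1) hA.str

/-- The action `[n]a · b = [n + 1](ab)` on the free Hom-module on one generator. -/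
noncomputable def HomAlg.freeAct (hA : HomAlg k A) : (ℤ →₀ A) →ₗ[k] A →ₗ[k] (ℤ →₀ A) :=
  Finsupp.lsum k fun n => hA.mul.compr₂ (Finsupp.lsingle (n + 1))

theorem HomAlg.freeStr_single (hA : HomAlg k A) (n : ℤ) (a : A) :
    hA.freeStr (Finsupp.single n a) = Finsupp.single (n + 1) (hA.str a) := by
  simp [freeStr]

theorem HomAlg.freeAct_single (hA : HomAlg k A) (n : ℤ) (a b : A) :
    hA.freeAct (Finsupp.single n a) b = Finsupp.single (n + 1) (hA.mul a b) := by
  simp [freeAct]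

theorem HomAlg.freeStr_apply (hA : HomAlg k A) (p : ℤ →₀ A) (n : ℤ) :
    hA.freeStr p (n + 1) = hA.str (p n) := by
  induction p using Finsupp.induction_linear with
  | zero => simp
  | add p q hp hq => simp only [map_add, Finsupp.add_apply, hp, hq]
  | single j a => by_cases hj : j = n <;> simp [freeStr_single, hj]

theorem HomAlg.freeAct_apply (hA : HomAlg k A) (p : ℤ →₀ A) (b : A) (n : ℤ) :
    hA.freeAct p b (n + 1) = hA.mul (p n) b := by
  induction p using Finsupp.induction_linear with
  | zero => simp
  | add p q hp hq => simp only [map_add, LinearMap.add_apply, Finsupp.add_apply, hp, hq]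
  | single j a => by_cases hj : j = n <;> simp [freeAct_single, hj]

/-- The free right Hom-module on one generator. The algebra `A` itself is not free on one
generator, since `a ↦ m · a` need not commute with the structure maps. -/
noncomputable def HomAlg.free (hA : HomAlg k A) : HomMod hA (ℤ →₀ A) where
  str := hA.freeStr
  act := hA.freeAct
  act_act p a b := by
    induction p using Finsupp.induction_linear with
    | zero => simp
    | add p q hp hq => simp only [map_add, LinearMap.add_apply, hp, hq]
    | single n x => simp [freeStr_single, freeAct_single, hA.hom_assoc]
  act_one p := by
    induction p using Finsupp.induction_linear with
    | zero => simp
    | add p q hp hq => simp only [map_add, LinearMap.add_apply, hp, hq]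
    | single n x => simp [freeStr_single, freeAct_single, hA.mul_one]
  str_act p a := by
    induction p using Finsupp.induction_linear with
    | zero => simp
    | add p q hp hq => simp only [map_add, LinearMap.add_apply, hp, hq]
    | single n x => simp [freeStr_single, freeAct_single, hA.str_mul]

/-- The generator of the free Hom-module; it sits in degree `-1` because `u = μ⁻¹(u) · 1` in
every Hom-module. -/
noncomputable def HomAlg.freeGen (hA : HomAlg k A) : ℤ →₀ A := Finsupp.single (-1) hA.one

/-- The morphism `[n]a ↦ μⁿ(u) · β⁻¹(a)` from the free Hom-module which sends the generator
to `u`. -/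
noncomputable def HomMod.freeLift {hA : HomAlg k A} (d : HomMod hA U) (u : U) :
    (ℤ →₀ A) →ₗ[k] U :=
  Finsupp.lsum k fun n => d.act ((d.str ^ n) u) ∘ₗ hA.str.symm.toLinearMap

theorem HomMod.freeLift_single {hA : HomAlg k A} (d : HomMod hA U) (u : U) (n : ℤ) (a : A) :
    d.freeLift u (Finsupp.single n a) = d.act ((d.str ^ n) u) (hA.str.symm a) := by
  simp [freeLift]

theorem HomMod.freeLift_freeGen {hA : HomAlg k A} (d : HomMod hA U) (u : U) :
    d.freeLift u hA.freeGen = u := by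
  rw [HomAlg.freeGen, freeLift_single, hA.str_symm_one, d.act_one, ← LinearEquiv.mul_apply,
    ← zpow_one_add, add_neg_cancel, zpow_zero, LinearEquiv.coe_one, id]

theorem HomMod.isHomModHom_freeLift {hA : HomAlg k A} (d : HomMod hA U) (u : U) :
    IsHomModHom hA.free d (d.freeLift u) where
  str_comm p := by
    change d.freeLift u (hA.freeStr p) = _
    induction p using Finsupp.induction_linear with
    | zero => simp
    | add p q hp hq => simp only [map_add, hp, hq]
    | single n a =>
      simp [HomAlg.freeStr_single, freeLift_single, d.str_act, add_comm n, zpow_one_add]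
  act_comm p b := by
    change d.freeLift u (hA.freeAct p b) = _
    induction p using Finsupp.induction_linear with
    | zero => simp
    | add p q hp hq => simp only [map_add, LinearMap.add_apply, hp, hq]
    | single n a =>
      rw [HomAlg.freeAct_single, freeLift_single, freeLift_single, hA.str_symm_mul, add_comm,
        zpow_one_add, LinearEquiv.mul_apply, ← d.act_act, LinearEquiv.apply_symm_apply]

theorem HomAlg.str_zpow_one (hA : HomAlg k A) (n : ℤ) : (hA.str ^ n) hA.one = hA.one :=
  zpow_mem (K := MulAction.stabilizer (A ≃ₗ[k] A) hA.one) hA.str_one n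

theorem HomAlg.freeStr_zpow_single (hA : HomAlg k A) (n j : ℤ) (a : A) :
    (hA.freeStr ^ n) (Finsupp.single j a) = Finsupp.single (j + n) ((hA.str ^ n) a) := by
  induction n generalizing j a with
  | zero => simp
  | succ n ih =>
    rw [zpow_add_one, zpow_add_one, LinearEquiv.mul_apply, LinearEquiv.mul_apply, freeStr_single,
      ih, add_right_comm, add_assoc]
  | pred n ih =>
    have hinv : hA.freeStr⁻¹ (Finsupp.single j a) = Finsupp.single (j - 1) (hA.str⁻¹ a) := by
      refine (LinearEquiv.symm_apply_eq _).2 ?_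
      rw [freeStr_single, sub_add_cancel]
      exact congrArg _ (hA.str.apply_symm_apply a).symm
    rw [zpow_sub_one, zpow_sub_one, LinearEquiv.mul_apply, LinearEquiv.mul_apply, hinv, ih,
      sub_add_eq_add_sub, add_sub_assoc]

theorem HomAlg.freeLift_single_apply (hA : HomAlg k A) (j : ℤ) (b : A) (p : ℤ →₀ A) :
    hA.free.freeLift (Finsupp.single j b) p (j + 2) =
      hA.mul (hA.str b) (hA.str.symm (p 1)) := by
  induction p using Finsupp.induction_linear with
  | zero => simp
  | add p q hp hq => simp only [map_add, Finsupp.add_apply, hp, hq]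
  | single n a =>
    rw [HomMod.freeLift_single]
    change hA.freeAct ((hA.freeStr ^ n) _) _ _ = _
    rw [freeStr_zpow_single, freeAct_single]
    obtain rfl | hn := eq_or_ne n 1
    · simp [add_assoc]
    · rw [Finsupp.single_eq_of_ne hn.symm, Finsupp.single_eq_of_ne (by lia), map_zero, map_zero]

variable {hH : HomBialg k H}

theorem HomComodAlg.map_lapply_freeLift_induced (hA : HomComodAlg hH A) (hC : HomModCoalg hH C)
    (e : C) (p : ℤ →₀ A) :
    map (Finsupp.lapply 1) .id
        ((hA.toHomAlg.free.induced hC).toHomMod.freeLift (hA.freeGen ⊗ₜ e) p) =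
      map .id (hC.act (hC.str e) ∘ₗ hH.str.symm.toLinearMap) (hA.coact (p 1)) := by
  induction p using Finsupp.induction_linear with
  | zero => simp
  | add p q hp hq => simp only [map_add, Finsupp.add_apply, hp, hq]
  | single n a =>
    have hgen : ((TensorProduct.congr hA.freeStr hC.str) ^ n) (hA.freeGen ⊗ₜ[k] e) =
        Finsupp.single (n - 1) hA.one ⊗ₜ (hC.str ^ n) e := by
      rw [congr_zpow, congr_tmul, HomAlg.freeGen, HomAlg.freeStr_zpow_single, hA.str_zpow_one,
        neg_add_eq_sub]
    rw [HomMod.freeLift_single]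
    change map _ _ (Gact hA hC hA.freeAct (((TensorProduct.congr hA.freeStr hC.str) ^ n) _) _) = _
    rw [hgen, Gact_tmul, map_map, apply_symm_eq_map_symm hA.coact_str, map_map]
    obtain rfl | hn := eq_or_ne n 1
    · rw [Finsupp.single_eq_same]
      congr 2; ext; simp [HomAlg.freeAct_single, hA.one_mul]
    · have hcoeff : Finsupp.lapply 1 ∘ₗ hA.freeAct (Finsupp.single (n - 1) hA.one) = 0 := by
        ext; simp [HomAlg.freeAct_single, hn.symm]
      simp [hcoeff, hn.symm]

end Free

section Retraction

variable {k H : Type*} {A C U V : Type v} [CommRing k]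
  [AddCommGroup H] [Module k H] [AddCommGroup A] [Module k A] [AddCommGroup C] [Module k C]
  [AddCommGroup U] [Module k U] [AddCommGroup V] [Module k V]
  {hH : HomBialg k H}

/-- A natural retraction of the unit `ρ_M : M → M ⊗ C` of the adjunction between the forgetful
functor and the induction functor `U ↦ U ⊗ C`. -/
structure NatRetraction (hA : HomComodAlg hH A) (hC : HomModCoalg hH C) where
  app : ∀ {M : Type v} [AddCommGroup M] [Module k M], DoiMod hA hC M → (M ⊗[k] C →ₗ[k] M)
  isDoiHom_app : ∀ {M : Type v} [AddCommGroup M] [Module k M] (d : DoiMod hA hC M),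
    IsDoiHom (d.toHomMod.induced hC) d (app d)
  app_coact : ∀ {M : Type v} [AddCommGroup M] [Module k M] (d : DoiMod hA hC M) (m : M),
    app d (d.coact m) = m
  naturality : ∀ {M N : Type v} [AddCommGroup M] [Module k M] [AddCommGroup N] [Module k N]
    {d : DoiMod hA hC M} {e : DoiMod hA hC N} {f : M →ₗ[k] N}, IsDoiHom d e f →
    ∀ x : M ⊗[k] C, app e (map f .id x) = f (app d x)

variable {hA : HomComodAlg hH A} {hC : HomModCoalg hH C}

/-- The natural retraction `ν_M(m ⊗ c) = μ(m₀) · θ(m₁ ⊗ γ⁻¹(c))` given by a normalized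
integral `θ`. -/
noncomputable def NIntegral.toNatRetraction (I : NIntegral hA hC) : NatRetraction hA hC where
  app := nuMap I.θ
  isDoiHom_app d :=
    { str_comm := I.nuMap_congr d
      act_comm := I.nuMap_Gact d
      coact_comm := I.coact_nuMap d }
  app_coact := I.nuMap_coact
  naturality := nuMap_map I.θ

namespace NatRetraction

variable (R : NatRetraction hA hC)

/-- The map `u, c ⊗ e ↦ δ_U(ν_{U ⊗ C}((u ⊗ γ⁻¹(c)) ⊗ e))`: the retraction on an induced module
followed by the counit of the adjunction. -/
noncomputable def pairing (d : HomMod hA.toHomAlg U) : U →ₗ[k] C ⊗[k] C →ₗ[k] U :=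
  curry (deltaMap hC.toHomCoalg d.str ∘ₗ R.app (d.induced hC) ∘ₗ
    map (map .id hC.str.symm.toLinearMap) .id ∘ₗ (TensorProduct.assoc k U C C).symm.toLinearMap)

theorem pairing_tmul (d : HomMod hA.toHomAlg U) (u : U) (c e : C) :
    R.pairing d u (c ⊗ₜ e) = deltaMap hC.toHomCoalg d.str
      (R.app (d.induced hC) ((u ⊗ₜ hC.str.symm c) ⊗ₜ e)) := rfl

theorem map_pairing {d : HomMod hA.toHomAlg U} {e : HomMod hA.toHomAlg V} {f : U →ₗ[k] V}
    (hf : IsHomModHom d e f) (u : U) (t : C ⊗[k] C) :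
    f (R.pairing d u t) = R.pairing e (f u) t := by
  induction t with
  | zero => simp
  | add s t hs ht => simp only [map_add, hs, ht]
  | tmul x y =>
    rw [pairing_tmul, pairing_tmul, ← deltaMap_map hC.toHomCoalg hf.str_comm,
      ← R.naturality (hf.induced hC), map_tmul, map_tmul, LinearMap.id_apply, LinearMap.id_apply]

theorem pairing_eq_freeLift (d : HomMod hA.toHomAlg U) (u : U) (t : C ⊗[k] C) :
    R.pairing d u t = d.freeLift u (R.pairing hA.free hA.freeGen t) := by
  rw [R.map_pairing (d.isHomModHom_freeLift u), d.freeLift_freeGen]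

theorem str_pairing (d : HomMod hA.toHomAlg U) (u : U) (t : C ⊗[k] C) :
    d.str (R.pairing d u t) =
      R.pairing d (d.str u) (map hC.str.toLinearMap hC.str.toLinearMap t) := by
  induction t with
  | zero => simp
  | add s t hs ht => simp only [map_add, hs, ht]
  | tmul x y =>
    rw [pairing_tmul, ← deltaMap_congr, map_tmul, pairing_tmul]
    congr 1
    refine ((R.isDoiHom_app (d.induced hC)).str_comm _).symm.trans ?_
    simp [HomMod.induced, DoiMod.toHomMod]

theorem pairing_comul (d : HomMod hA.toHomAlg U) (u : U) (c : C) :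
    R.pairing d u (hC.comul c) = hC.counit c • d.str (d.str u) := by
  have hcoact : map (map .id hC.str.symm.toLinearMap) .id
      ((TensorProduct.assoc k U C C).symm (u ⊗ₜ hC.comul c)) =
      (d.induced hC).coact (d.str u ⊗ₜ hC.str.symm c) := by
    change _ = Gcoact hC.toHomCoalg d.str _
    rw [Gcoact_tmul, apply_symm_eq_map_symm hC.comul_str]
    generalize hC.comul c = t
    induction t with
    | zero => simp
    | add s t hs ht => simp only [map_add, tmul_add, hs, ht]
    | tmul x y => simp
  change deltaMap hC.toHomCoalg d.str (R.app (d.induced hC) _) = _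
  refine (congrArg _ (congrArg _ hcoact)).trans ?_
  rw [R.app_coact]
  simp [deltaMap, ← hC.counit_str (hC.str.symm c)]

theorem act_pairing (d : HomMod hA.toHomAlg U) (u : U) (c e : C) (a : A) :
    d.act (R.pairing d u (hC.str c ⊗ₜ hC.str e)) a =
      lift (R.pairing d) (TensorProduct.assoc k U C C
        (map (map (d.act u) (hC.str.toLinearMap ∘ₗ hC.act c)) (hC.str.toLinearMap ∘ₗ hC.act e)
          (map hA.coact hH.str.symm.toLinearMap (hA.coact a)))) := by
  rw [pairing_tmul, LinearEquiv.symm_apply_apply, ← deltaMap_Gact]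
  have h := (R.isDoiHom_app (d.induced hC)).act_comm ((u ⊗ₜ c) ⊗ₜ hC.str e) a
  refine (congrArg _ h).symm.trans ?_
  change deltaMap hC.toHomCoalg d.str (R.app (d.induced hC) (Gact hA hC (Gact hA hC d.act) _ _)) = _
  rw [Gact_tmul]
  generalize hA.coact a = t
  induction t with
  | zero => simp
  | add s t hs ht => simp only [map_add, hs, ht]
  | tmul b h =>
    simp only [map_tmul, Gact_tmul]
    generalize hA.coact b = t
    induction t with
    | zero => simp
    | add s t hs ht => simp only [map_add, add_tmul, hs, ht]
    | tmul b g => simp [pairing_tmul, hC.str_act e]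

theorem app_induced_eq_map_pairing (d : HomMod hA.toHomAlg U) (u : U) (c e : C) :
    R.app (d.induced hC) ((d.str u ⊗ₜ c) ⊗ₜ e) =
      map (curry (R.pairing d u) c) hC.str.toLinearMap (hC.comul e) := by
  have h := (R.isDoiHom_app (d.induced hC)).coact_comm ((d.str u ⊗ₜ c) ⊗ₜ e)
  rw [← map_deltaMap_Gcoact hC.toHomCoalg d.str (R.app _ _)]
  refine (congrArg _ h).trans ?_
  change map _ _ (map _ _ (Gcoact hC.toHomCoalg (TensorProduct.congr d.str hC.str) _)) = _
  rw [Gcoact_tmul, map_map, map_map]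
  congr 2
  ext x
  simp [pairing_tmul]

theorem app_induced_eq_lift_pairing (d : HomMod hA.toHomAlg U) (u : U) (c e : C) :
    R.app (d.induced hC) ((d.str u ⊗ₜ c) ⊗ₜ e) =
      lift ((R.pairing (d.induced hC).toHomMod ∘ₗ TensorProduct.mk k U C u).compl₂
        ((TensorProduct.mk k C C).flip e ∘ₗ hC.str.toLinearMap ∘ₗ hC.str.toLinearMap))
          (hC.comul c) := by
  rw [← (d.induced hC).deltaMap_coact (R.app _ _),
    ← R.naturality (d.induced hC).isDoiHom_coact, map_tmul]
  change deltaMap _ _ (R.app _ (Gcoact hC.toHomCoalg d.str _ ⊗ₜ _)) = _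
  rw [Gcoact_tmul]
  generalize hC.comul c = t
  induction t with
  | zero => simp
  | add s t hs ht => simp only [map_add, add_tmul, hs, ht]
  | tmul x y => simp [pairing_tmul, DoiMod.toHomMod]

/-- The degree `1` coefficient of the universal element `pairing freeGen`. The degree is dictated by
`ν_M(m ⊗ c) = μ(m₀) · θ(m₁ ⊗ γ⁻¹(c))`: the retraction obtained from an integral `θ` has universal
element `[1]θ`. -/
noncomputable def integral : C ⊗[k] C →ₗ[k] A :=
  Finsupp.lapply 1 ∘ₗ R.pairing hA.free hA.freeGen

theorem pairing_single_apply (j : ℤ) (b : A) (t : C ⊗[k] C) :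
    R.pairing hA.free (Finsupp.single j b) t (j + 2) =
      hA.mul (hA.str b) (hA.str.symm (R.integral t)) := by
  rw [pairing_eq_freeLift, HomAlg.freeLift_single_apply]
  rfl

theorem integral_str (c e : C) :
    R.integral (hC.str c ⊗ₜ hC.str e) = hA.str (R.integral (c ⊗ₜ e)) := by
  have hgen : hA.free.str hA.freeGen = Finsupp.single 0 hA.one := by
    simp [HomAlg.free, HomAlg.freeGen, HomAlg.freeStr_single, hA.str_one]
  have hstr : hA.str (R.integral (c ⊗ₜ e)) =
      hA.free.str (R.pairing hA.free hA.freeGen (c ⊗ₜ e)) (0 + 2) :=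
    (hA.freeStr_apply (R.pairing hA.free hA.freeGen (c ⊗ₜ e)) 1).symm
  rw [hstr, str_pairing, hgen, pairing_single_apply, hA.str_one, hA.one_mul,
    LinearEquiv.apply_symm_apply, map_tmul, LinearEquiv.coe_coe]

theorem integral_comul (c : C) : R.integral (hC.comul c) = hC.counit c • hA.one := by
  simp [integral, pairing_comul, HomAlg.free, HomAlg.freeGen, HomAlg.freeStr_single, hA.str_one]

theorem mul_integral (a : A) (c e : C) :
    lift hA.mul (map .id R.integral (TensorProduct.assoc k A C C
      (map (map (hA.str.toLinearMap ∘ₗ hA.str.toLinearMap) (hC.act c)) (hC.act e)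
        (map hA.coact hH.str.symm.toLinearMap (hA.coact a))))) =
      hA.mul (R.integral (hC.str c ⊗ₜ hC.str e)) a := by
  have hgen (b : A) : hA.free.act hA.freeGen b = Finsupp.single 0 (hA.str b) := by
    simp [HomAlg.free, HomAlg.freeGen, HomAlg.freeAct_single, hA.one_mul]
  have hact : hA.mul (R.integral (hC.str c ⊗ₜ hC.str e)) a =
      hA.free.act (R.pairing hA.free hA.freeGen (hC.str c ⊗ₜ hC.str e)) a (0 + 2) :=
    (hA.freeAct_apply (R.pairing hA.free hA.freeGen (hC.str c ⊗ₜ hC.str e)) a 1).symm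
  rw [hact, act_pairing]
  generalize map hA.coact hH.str.symm.toLinearMap (hA.coact a) = t
  induction t with
  | zero => simp
  | add s t hs ht => simp only [map_add, Finsupp.add_apply, hs, ht]
  | tmul s h =>
  induction s with
  | zero => simp
  | add s t hs ht => simp only [map_add, add_tmul, Finsupp.add_apply, hs, ht]
  | tmul b g =>
    simp only [map_tmul, assoc_tmul, lift.tmul, hgen, pairing_single_apply]
    simp [R.integral_str]

theorem map_lapply_pairing_induced (x : C) (t : C ⊗[k] C) :
    map (Finsupp.lapply 1) .id
        (R.pairing (hA.toHomAlg.free.induced hC).toHomMod (hA.freeGen ⊗ₜ x) t) =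
      map .id (hC.act (hC.str x) ∘ₗ hH.str.symm.toLinearMap) (hA.coact (R.integral t)) := by
  rw [pairing_eq_freeLift, HomComodAlg.map_lapply_freeLift_induced]
  rfl

theorem map_curry_integral_comul (c e : C) :
    map (curry R.integral c) hC.str.toLinearMap (hC.comul e) =
      lift (integralCoact hA hC R.integral e)
        (map hC.str.toLinearMap hC.str.toLinearMap (hC.comul c)) := by
  have hleft : map (curry R.integral c) hC.str.toLinearMap (hC.comul e) =
      map (Finsupp.lapply 1) .id (R.app (hA.toHomAlg.free.induced hC)
        ((hA.free.str hA.freeGen ⊗ₜ c) ⊗ₜ e)) := by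
    rw [app_induced_eq_map_pairing, map_map]
    rfl
  rw [hleft, app_induced_eq_lift_pairing]
  generalize hC.comul c = t
  induction t with
  | zero => simp
  | add s t hs ht => simp only [map_add, hs, ht]
  | tmul x y =>
    have hstr := R.integral_str (hC.str y) (hC.str.symm e)
    rw [LinearEquiv.apply_symm_apply] at hstr
    simp only [lift.tmul, LinearMap.compl₂_apply, LinearMap.comp_apply, mk_apply,
      LinearMap.flip_apply, LinearEquiv.coe_coe, map_lapply_pairing_induced, hstr, hA.coact_str,
      map_map, map_tmul, integralCoact_apply]
    congr 2; ext; simp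

/-- The normalized integral of a natural retraction. -/
noncomputable def toNIntegral : NIntegral hA hC where
  θ := R.integral
  θ_str := R.integral_str
  cond1 c e := by
    rw [← lift_integralCoact, map_curry_integral_comul, ← hC.comul_str,
      LinearEquiv.apply_symm_apply]
  cond2 := R.integral_comul
  cond3 a c e := by
    rw [mul_integral, LinearEquiv.apply_symm_apply, LinearEquiv.apply_symm_apply]

end NatRetraction

end Retraction

end DoiHomHopf

theorem separability_iff_integral_general {k H : Type*} {A C : Type v} [CommRing k]
    [AddCommGroup H] [Module k H] [AddCommGroup A] [Module k A] [AddCommGroup C] [Module k C]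
    {hH : HomBialg k H} (hA : HomComodAlg hH A) (hC : HomModCoalg hH C) :
    Nonempty (NIntegral hA hC) ↔
      ∃ ν : ∀ (M : Type v) [AddCommGroup M] [Module k M], DoiMod hA hC M → ((M ⊗[k] C) →ₗ[k] M),
        (∀ (M : Type v) [AddCommGroup M] [Module k M] (d : DoiMod hA hC M),
          (∀ x : M ⊗[k] C, ν M d (TensorProduct.congr d.str hC.str x) = d.str (ν M d x)) ∧
          (∀ (x : M ⊗[k] C) (a : A), ν M d (Gact hA hC d.act x a) = d.act (ν M d x) a) ∧
          (∀ x : M ⊗[k] C, d.coact (ν M d x) =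
            TensorProduct.map (ν M d) LinearMap.id (Gcoact hC.toHomCoalg d.str x)) ∧
          (∀ m : M, ν M d (d.coact m) = m)) ∧
        (∀ (M N : Type v) [AddCommGroup M] [Module k M] [AddCommGroup N] [Module k N]
          (dM : DoiMod hA hC M) (dN : DoiMod hA hC N) (f : M →ₗ[k] N),
          IsDoiHom dM dN f →
          ∀ x : M ⊗[k] C, ν N dN (TensorProduct.map f LinearMap.id x) = f (ν M dM x)) := by
  constructor
  · rintro ⟨I⟩
    let R := I.toNatRetraction
    refine ⟨fun M _ _ d => R.app d, fun M _ _ d => ?_, fun M N _ _ _ _ dM dN f => R.naturality⟩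
    obtain ⟨hstr, hact, hcoact⟩ := R.isDoiHom_app d
    exact ⟨hstr, hact, hcoact, R.app_coact d⟩
  · rintro ⟨ν, hν, hnat⟩
    let R : NatRetraction hA hC :=
      { app := fun {M} _ _ d => ν M d
        isDoiHom_app := fun {M} _ _ d => ⟨(hν M d).1, (hν M d).2.1, (hν M d).2.2.1⟩
        app_coact := fun {M} _ _ d => (hν M d).2.2.2
        naturality := fun {M N} _ _ _ _ dM dN f => hnat M N dM dN f }
    exact ⟨R.toNIntegral⟩

/-- Main theorem: a Doi Hom-Hopf datum `(H, A, C)` admits a normalized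
`(A, β)`-integral iff the forgetful functor is separable, i.e. iff there is a natural
retraction `ν_M : M ⊗ C → M` of the unit of the adjunction, compatible with all the
structure. -/
theorem separability_iff_integral {k : Type u} [CommRing k] {H A C : Type v}
    [AddCommGroup H] [Module k H] [AddCommGroup A] [Module k A] [AddCommGroup C] [Module k C]
    (hH : HomHopf k H) (hA : HomComodAlg hH.toHomBialg A) (hC : HomModCoalg hH.toHomBialg C) :
    Nonempty (NIntegral hA hC) ↔
      ∃ ν : ∀ (M : Type v) [AddCommGroup M] [Module k M], DoiMod hA hC M → ((M ⊗[k] C) →ₗ[k] M),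
        (∀ (M : Type v) [AddCommGroup M] [Module k M] (d : DoiMod hA hC M),
          (∀ x : M ⊗[k] C, ν M d (TensorProduct.congr d.str hC.str x) = d.str (ν M d x)) ∧
          (∀ (x : M ⊗[k] C) (a : A), ν M d (Gact hA hC d.act x a) = d.act (ν M d x) a) ∧
          (∀ x : M ⊗[k] C, d.coact (ν M d x) =
            TensorProduct.map (ν M d) LinearMap.id (Gcoact hC.toHomCoalg d.str x)) ∧
          (∀ m : M, ν M d (d.coact m) = m)) ∧
        (∀ (M N : Type v) [AddCommGroup M] [Module k M] [AddCommGroup N] [Module k N]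
          (dM : DoiMod hA hC M) (dN : DoiMod hA hC N) (f : M →ₗ[k] N),
          IsDoiHom dM dN f →
          ∀ x : M ⊗[k] C, ν N dN (TensorProduct.map f LinearMap.id x) = f (ν M dM x)) :=
  separability_iff_integral_general hA hC
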